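/- Let 𝒜 be a C*-algebra with a dense *-subalgebra 𝒟. If the Lebesgue decomposition of representable positive functionals over 𝒟 is unique, then the Lebesgue decomposition of positive functionals over 𝒜 is unique. -/

import Mathlib

open scoped ComplexOrder InnerProductSpace

section StarAlgebraDefs

variable {A : Type} [NonUnitalRing A] [Module ℂ A] [SMulCommClass ℂ A A]
  [IsScalarTower ℂ A A] [StarRing A] [StarModule ℂ A]

/-- A linear functional on a `⋆`-algebra is positive if `0 ≤ f (a⋆ * a)` for every `a`. -/
def IsPosFn (f : A →ₗ[ℂ] ℂ) : Prop := ∀ a : A, 0 ≤ f (star a * a)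

/-- Order on positive functionals: `f ≤ g` iff `g - f` is positive. -/
def FnLE (f g : A →ₗ[ℂ] ℂ) : Prop := IsPosFn (g - f)

/-- `f` is induced by a `⋆`-representation on the Hilbert space `H` with a cyclic vector. -/
def IsRepOn (f : A →ₗ[ℂ] ℂ) (H : Type) [NormedAddCommGroup H]
    [InnerProductSpace ℂ H] [CompleteSpace H] : Prop :=
  ∃ (π : A →⋆ₙₐ[ℂ] (H →L[ℂ] H)) (ξ : H),
    DenseRange (fun a : A => π a ξ) ∧ ∀ a : A, f a = ⟪ξ, π a ξ⟫_ℂ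

/-- A positive linear functional is representable if it is induced by a cyclic
`⋆`-representation on some complex Hilbert space. -/
def IsRepresentable (f : A →ₗ[ℂ] ℂ) : Prop :=
  ∃ (H : Type) (_ : NormedAddCommGroup H) (_ : InnerProductSpace ℂ H) (_ : CompleteSpace H),
    IsRepOn f H

/-- Absolute continuity `f ≪ g` for representable positive functionals: `f` is the pointwise
limit of an increasing sequence of representable positive functionals `fₙ` with
`fₙ ≤ αₙ • g` for some positive reals `αₙ`. -/
def AbsContR (f g : A →ₗ[ℂ] ℂ) : Prop :=
  ∃ (fn : ℕ → (A →ₗ[ℂ] ℂ)) (α : ℕ → ℝ),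
    (∀ n, IsRepresentable (fn n) ∧ IsPosFn (fn n)) ∧
    (∀ n, 0 < α n) ∧
    (∀ n, FnLE (fn n) (fn (n + 1))) ∧
    (∀ n, FnLE (fn n) (((α n : ℂ)) • g)) ∧
    (∀ a : A, Filter.Tendsto (fun n => fn n a) Filter.atTop (nhds (f a)))

/-- Singularity `f ⊥ g` for representable positive functionals: the only representable
positive functional dominated by both `f` and `g` is `0`. -/
def SingularR (f g : A →ₗ[ℂ] ℂ) : Prop :=
  ∀ p : A →ₗ[ℂ] ℂ, IsRepresentable p → IsPosFn p → FnLE p f → FnLE p g → p = 0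

/-- `f = fr + fs` is a Lebesgue decomposition of `f` with respect to `g` (representable
positive functionals). -/
def IsLebDecompR (f g fr fs : A →ₗ[ℂ] ℂ) : Prop :=
  IsRepresentable fr ∧ IsPosFn fr ∧ IsRepresentable fs ∧ IsPosFn fs ∧
    f = fr + fs ∧ AbsContR fr g ∧ SingularR fs g

/-- The Lebesgue decomposition of `f` with respect to `g` is unique. -/
def LebDecompUniqueForR (f g : A →ₗ[ℂ] ℂ) : Prop :=
  ∀ fr fs fr' fs' : A →ₗ[ℂ] ℂ, IsLebDecompR f g fr fs → IsLebDecompR f g fr' fs' →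
    fr = fr' ∧ fs = fs'

end StarAlgebraDefs

/-- The Lebesgue decomposition of representable positive functionals over `A` is unique. -/
def LebDecompUniqueR (A : Type) [NonUnitalRing A] [Module ℂ A] [SMulCommClass ℂ A A]
    [IsScalarTower ℂ A A] [StarRing A] [StarModule ℂ A] : Prop :=
  ∀ f g : A →ₗ[ℂ] ℂ, IsRepresentable f → IsPosFn f → IsRepresentable g → IsPosFn g →
    LebDecompUniqueForR f g

section CStarDefs

variable {A : Type} [NonUnitalCStarAlgebra A]

/-- A linear functional on a C⋆-algebra is positive if `0 ≤ f (a⋆ * a)` for every `a`. -/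
def IsPosFnC (f : A →ₗ[ℂ] ℂ) : Prop := ∀ a : A, 0 ≤ f (star a * a)

/-- Order on positive functionals: `f ≤ g` iff `g - f` is positive. -/
def FnLEC (f g : A →ₗ[ℂ] ℂ) : Prop := IsPosFnC (g - f)

/-- Absolute continuity `f ≪ g` for positive functionals on a C⋆-algebra: `f` is the
pointwise limit of an increasing sequence of positive functionals `fₙ` with `fₙ ≤ αₙ • g`
for some positive reals `αₙ`. -/
def AbsContC (f g : A →ₗ[ℂ] ℂ) : Prop :=
  ∃ (fn : ℕ → (A →ₗ[ℂ] ℂ)) (α : ℕ → ℝ),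
    (∀ n, IsPosFnC (fn n)) ∧
    (∀ n, 0 < α n) ∧
    (∀ n, FnLEC (fn n) (fn (n + 1))) ∧
    (∀ n, FnLEC (fn n) (((α n : ℂ)) • g)) ∧
    (∀ a : A, Filter.Tendsto (fun n => fn n a) Filter.atTop (nhds (f a)))

/-- Singularity `f ⊥ g`: the only positive functional dominated by both `f` and `g`
is `0`. -/
def SingularC (f g : A →ₗ[ℂ] ℂ) : Prop :=
  ∀ p : A →ₗ[ℂ] ℂ, IsPosFnC p → FnLEC p f → FnLEC p g → p = 0

/-- `f = fr + fs` is a Lebesgue decomposition of `f` with respect to `g`. -/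
def IsLebDecompC (f g fr fs : A →ₗ[ℂ] ℂ) : Prop :=
  IsPosFnC fr ∧ IsPosFnC fs ∧ f = fr + fs ∧ AbsContC fr g ∧ SingularC fs g

/-- The Lebesgue decomposition of `f` with respect to `g` is unique. -/
def LebDecompUniqueForC (f g : A →ₗ[ℂ] ℂ) : Prop :=
  ∀ fr fs fr' fs' : A →ₗ[ℂ] ℂ, IsLebDecompC f g fr fs → IsLebDecompC f g fr' fs' →
    fr = fr' ∧ fs = fs'

end CStarDefs

/-- The Lebesgue decomposition of positive functionals over the C⋆-algebra `A` is unique. -/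
def LebDecompUniqueC (A : Type) [NonUnitalCStarAlgebra A] : Prop :=
  ∀ f g : A →ₗ[ℂ] ℂ, IsPosFnC f → IsPosFnC g → LebDecompUniqueForC f g

section Helpers

open UniformSpace Filter

/-- GNS representation with cyclic vector, for an ordered non-unital C⋆-algebra. -/
theorem gns_bound {A : Type} [NonUnitalCStarAlgebra A] [PartialOrder A] [StarOrderedRing A]
    (f : A →ₚ[ℂ] ℂ) : ∃ C : ℝ, ∀ a : A, ‖f a‖ ≤ C * ‖f.toPreGNS a‖ := by
  obtain ⟨C, hC⟩ := f.exists_norm_apply_le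
  refine ⟨√C, fun a => ?_⟩
  have hl := CStarAlgebra.increasingApproximateUnit A
  have hcont : Continuous f := map_continuous f
  have ht : Tendsto (fun e : A => ‖f (e * a)‖) (CStarAlgebra.approximateUnit A)
      (nhds ‖f a‖) :=
    ((hcont.tendsto a).comp (hl.tendsto_mul_right a)).norm
  refine le_of_tendsto ht ?_
  filter_upwards [hl.eventually_star_eq, hl.eventually_norm] with e he hn
  have h1 : f (e * a) = ⟪f.toPreGNS e, f.toPreGNS a⟫_ℂ := by
    rw [f.preGNS_inner_def]; simp [he]
  rw [h1]
  refine (norm_inner_le_norm _ _).trans ?_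
  gcongr
  rw [f.preGNS_norm_def]
  apply Real.sqrt_le_sqrt
  refine (Complex.re_le_norm _).trans ((hC _).trans ?_)
  have : ‖star (f.ofPreGNS (f.toPreGNS e)) * f.ofPreGNS (f.toPreGNS e)‖ ≤ 1 := by
    simp only [f.ofPreGNS_toPreGNS, CStarRing.norm_star_mul_self]
    nlinarith [norm_nonneg e]
  nlinarith [C.2, show (0:ℝ) ≤ C from C.2]

theorem gns_vector {A : Type} [NonUnitalCStarAlgebra A] [PartialOrder A] [StarOrderedRing A]
    (f : A →ₚ[ℂ] ℂ) :
    ∃ ξ : f.GNS, ∀ a : A, f a = ⟪ξ, ((f.toPreGNS a : f.PreGNS) : f.GNS)⟫_ℂ := by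
  obtain ⟨C, hC⟩ := gns_bound f
  let e : f.PreGNS →ₗ[ℂ] f.GNS := (Completion.toComplL (𝕜 := ℂ) (E := f.PreGNS)).toLinearMap
  let l : f.PreGNS →ₗ[ℂ] ℂ := f.toLinearMap ∘ₗ f.ofPreGNS.toLinearMap
  have hd : DenseRange e := Completion.denseRange_coe
  have hn : ∃ C, ∀ x, ‖l x‖ ≤ C * ‖e x‖ := ⟨C, fun x => by
    have := hC (f.ofPreGNS x)
    have h2 : ‖e x‖ = ‖x‖ := Completion.norm_coe x
    rw [h2]
    exact this⟩
  refine ⟨(InnerProductSpace.toDual ℂ f.GNS).symm (l.extendOfNorm e), fun a => ?_⟩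
  rw [InnerProductSpace.toDual_symm_apply]
  exact (LinearMap.extendOfNorm_eq hd hn (f.toPreGNS a)).symm

theorem gns_cyclic {A : Type} [NonUnitalCStarAlgebra A] [PartialOrder A] [StarOrderedRing A]
    (f : A →ₚ[ℂ] ℂ) :
    ∃ ξ : f.GNS, (∀ a : A, f.gnsNonUnitalStarAlgHom a ξ = ((f.toPreGNS a : f.PreGNS) : f.GNS)) ∧
      ∀ a : A, f a = ⟪ξ, f.gnsNonUnitalStarAlgHom a ξ⟫_ℂ := by
  obtain ⟨ξ, hξ⟩ := gns_vector f
  have key : ∀ a : A, f.gnsNonUnitalStarAlgHom a ξ = ((f.toPreGNS a : f.PreGNS) : f.GNS) := by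
    intro a
    have hcl : ∀ x : f.GNS, ⟪f.gnsNonUnitalStarAlgHom a ξ, x⟫_ℂ =
        ⟪((f.toPreGNS a : f.PreGNS) : f.GNS), x⟫_ℂ := by
      intro x
      induction x using Completion.induction_on with
      | hp => apply isClosed_eq <;> fun_prop
      | ih x =>
        rw [← ContinuousLinearMap.adjoint_inner_right, ← ContinuousLinearMap.star_eq_adjoint,
          ← map_star, f.gnsNonUnitalStarAlgHom_apply_coe, Completion.inner_coe,
          f.preGNS_inner_def]
        exact (hξ (star a * f.ofPreGNS x)).symm
    exact ext_inner_right ℂ hcl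
  exact ⟨ξ, key, fun a => by rw [key, hξ]⟩

/-- A positive functional as a bundled positive map. -/
theorem exists_posMap {A : Type} [NonUnitalCStarAlgebra A] [PartialOrder A] [StarOrderedRing A]
    (f : A →ₗ[ℂ] ℂ) (hf : IsPosFnC f) : ∃ F : A →ₚ[ℂ] ℂ, ∀ a, F a = f a :=
  ⟨PositiveLinearMap.mk₀ f fun a ha => by
    obtain ⟨b, rfl⟩ := CStarAlgebra.nonneg_iff_eq_star_mul_self.mp ha
    exact hf b, fun _ => rfl⟩

theorem posC_continuous {A : Type} [NonUnitalCStarAlgebra A]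
    (f : A →ₗ[ℂ] ℂ) (hf : IsPosFnC f) : Continuous f := by
  let _ := CStarAlgebra.spectralOrder A
  have := CStarAlgebra.spectralOrderedRing A
  obtain ⟨F, hF⟩ := exists_posMap f hf
  have : Continuous F := map_continuous F
  exact this.congr hF

/-- The restriction of a functional to a subalgebra. -/
def resFn {A : Type} [NonUnitalCStarAlgebra A] (D : NonUnitalStarSubalgebra ℂ A)
    (f : A →ₗ[ℂ] ℂ) : D →ₗ[ℂ] ℂ := f ∘ₗ D.toSubmodule.subtype

theorem res_rep {A : Type} [NonUnitalCStarAlgebra A] (D : NonUnitalStarSubalgebra ℂ A)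
    (hD : Dense (D : Set A)) (f : A →ₗ[ℂ] ℂ) (hf : IsPosFnC f) :
    IsRepresentable (resFn D f) := by
  let _ := CStarAlgebra.spectralOrder A
  have := CStarAlgebra.spectralOrderedRing A
  obtain ⟨F, hF⟩ := exists_posMap f hf
  obtain ⟨ξ, h1, h2⟩ := gns_cyclic F
  refine ⟨F.GNS, inferInstance, inferInstance, inferInstance,
    F.gnsNonUnitalStarAlgHom.comp (NonUnitalStarSubalgebraClass.subtype D), ξ, ?_, fun a => ?_⟩
  · have hcont : Continuous F := map_continuous F
    have hc : Continuous (fun a : A => ((F.toPreGNS a : F.PreGNS) : F.GNS)) := by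
      refine (Completion.continuous_coe F.PreGNS).comp ?_
      have hl : Continuous (F.toPreGNS : A →ₗ[ℂ] F.PreGNS) := by
        obtain ⟨C, hC⟩ := F.exists_norm_apply_le
        refine (LinearMap.mkContinuous (F.toPreGNS : A →ₗ[ℂ] F.PreGNS) (√C) fun a => ?_).continuous
        have h3 : ‖F.toPreGNS a‖ = √(F (star a * a)).re := F.preGNS_norm_def _
        change ‖F.toPreGNS a‖ ≤ _
        rw [h3]
        refine Real.sqrt_le_iff.mpr ⟨by positivity, (Complex.re_le_norm _).trans ((hC _).trans ?_)⟩
        rw [CStarRing.norm_star_mul_self, mul_pow, Real.sq_sqrt C.coe_nonneg, sq]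
      exact hl
    have hdr : DenseRange (fun a : A => ((F.toPreGNS a : F.PreGNS) : F.GNS)) :=
      Completion.denseRange_coe (α := F.PreGNS)
    have hs : DenseRange (fun d : D => (d : A)) := by
      have hr : Set.range (fun d : D => (d : A)) = (D : Set A) := Subtype.range_coe
      rw [DenseRange, hr]; exact hD
    have := hdr.comp hs hc
    refine this.mono ?_
    rintro _ ⟨d, rfl⟩
    exact ⟨d, h1 d⟩
  · change f a = _
    rw [← hF, h2]
    rfl

theorem res_pos {A : Type} [NonUnitalCStarAlgebra A] (D : NonUnitalStarSubalgebra ℂ A)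
    (f : A →ₗ[ℂ] ℂ) (hf : IsPosFnC f) : IsPosFn (resFn D f) := fun d => hf d

theorem res_absCont {A : Type} [NonUnitalCStarAlgebra A] (D : NonUnitalStarSubalgebra ℂ A)
    (hD : Dense (D : Set A)) (f g : A →ₗ[ℂ] ℂ) (h : AbsContC f g) :
    AbsContR (resFn D f) (resFn D g) := by
  obtain ⟨fn, α, h1, h2, h3, h4, h5⟩ := h
  exact ⟨fun n => resFn D (fn n), α, fun n => ⟨res_rep D hD _ (h1 n), res_pos D _ (h1 n)⟩, h2,
    fun n => res_pos D _ (h3 n), fun n => res_pos D _ (h4 n), fun a => h5 a⟩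

theorem pos_of_res {A : Type} [NonUnitalCStarAlgebra A] (D : NonUnitalStarSubalgebra ℂ A)
    (hD : Dense (D : Set A)) (f : A →ₗ[ℂ] ℂ) (hc : Continuous f) (hf : IsPosFn (resFn D f)) :
    IsPosFnC f := by
  intro a
  have hcl : IsClosed {a : A | 0 ≤ f (star a * a)} :=
    isClosed_le continuous_const (hc.comp (by fun_prop))
  have : closure (D : Set A) ⊆ {a : A | 0 ≤ f (star a * a)} :=
    closure_minimal (fun d hd => hf ⟨d, hd⟩) hcl
  exact this (hD a)

theorem eq_of_res {A : Type} [NonUnitalCStarAlgebra A] (D : NonUnitalStarSubalgebra ℂ A)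
    (hD : Dense (D : Set A)) (f g : A →ₗ[ℂ] ℂ) (hf : Continuous f) (hg : Continuous g)
    (h : resFn D f = resFn D g) : f = g := by
  apply DFunLike.coe_injective
  exact Continuous.ext_on hD hf hg fun d hd => LinearMap.congr_fun h ⟨d, hd⟩

theorem res_singular {A : Type} [NonUnitalCStarAlgebra A] (D : NonUnitalStarSubalgebra ℂ A)
    (hD : Dense (D : Set A)) (f g : A →ₗ[ℂ] ℂ) (hf : IsPosFnC f) (hg : IsPosFnC g)
    (h : SingularC f g) : SingularR (resFn D f) (resFn D g) := by
  intro p hrep hpos hpf hpg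
  obtain ⟨H, _, _, _, π, ξ, -, hξ⟩ := hrep
  have hgc := posC_continuous g hg
  have hfc := posC_continuous f hf
  let G : A →L[ℂ] ℂ := ⟨g, hgc⟩
  have hb : ∀ d : D, ‖p d‖ ≤ (‖ξ‖ * √‖G‖) * ‖(d : A)‖ := by
    intro d
    rw [hξ d, mul_assoc]
    refine (norm_inner_le_norm _ _).trans ?_
    gcongr
    have e1 : p (star d * d) = ((‖π d ξ‖ ^ 2 : ℝ) : ℂ) := by
      rw [hξ, map_mul, map_star, ContinuousLinearMap.star_eq_adjoint,
        ContinuousLinearMap.mul_apply, ContinuousLinearMap.adjoint_inner_right,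
        inner_self_eq_norm_sq_to_K]
      simp
    have e2 : p (star d * d) ≤ g (star (d : A) * d) := sub_nonneg.mp (hpg d)
    have e3 : ‖π d ξ‖ ^ 2 ≤ ‖G‖ * ‖(d : A)‖ ^ 2 := by
      rw [e1] at e2
      have e4 := (Complex.le_def.mp e2).1
      rw [Complex.ofReal_re] at e4
      refine e4.trans ((Complex.re_le_norm _).trans ((G.le_opNorm _).trans ?_))
      rw [CStarRing.norm_star_mul_self, sq]
    refine abs_le_of_sq_le_sq' ?_ (by positivity) |>.2
    rwa [mul_pow, Real.sq_sqrt (norm_nonneg _)]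
  let e : D →ₗ[ℂ] A := D.toSubmodule.subtype
  have hd : DenseRange e := by
    have : Set.range e = (D : Set A) := Subtype.range_coe
    rw [DenseRange, this]; exact hD
  let P : A →L[ℂ] ℂ := p.extendOfNorm e
  have hP : resFn D P.toLinearMap = p :=
    LinearMap.ext fun d => LinearMap.extendOfNorm_eq hd ⟨_, hb⟩ d
  have hPc : Continuous P.toLinearMap := P.continuous
  have hP' : ∀ d : D, P d = p d := fun d => LinearMap.congr_fun hP d
  have h0 : P.toLinearMap = 0 := by
    refine h _ ?_ ?_ ?_
    · exact pos_of_res D hD _ hPc (by rw [hP]; exact hpos)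
    · refine pos_of_res D hD _ (hfc.sub hPc) ?_
      have : resFn D (f - P.toLinearMap) = resFn D f - p := by rw [← hP]; rfl
      rw [this]; exact hpf
    · refine pos_of_res D hD _ (hgc.sub hPc) ?_
      have : resFn D (g - P.toLinearMap) = resFn D g - p := by rw [← hP]; rfl
      rw [this]; exact hpg
  rw [← hP, h0]; rfl

theorem res_decomp {A : Type} [NonUnitalCStarAlgebra A] (D : NonUnitalStarSubalgebra ℂ A)
    (hD : Dense (D : Set A)) (f g fr fs : A →ₗ[ℂ] ℂ) (hg : IsPosFnC g)
    (h : IsLebDecompC f g fr fs) :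
    IsLebDecompR (resFn D f) (resFn D g) (resFn D fr) (resFn D fs) := by
  obtain ⟨h1, h2, h3, h4, h5⟩ := h
  exact ⟨res_rep D hD _ h1, res_pos D _ h1, res_rep D hD _ h2, res_pos D _ h2,
    by rw [h3]; rfl, res_absCont D hD _ _ h4, res_singular D hD _ _ h2 hg h5⟩

end Helpers

/-- **Corollary 2.21** (Corollary `vegsocor`): if `𝒟` is a dense `⋆`-subalgebra of a
C⋆-algebra `𝒜` and the Lebesgue decomposition of representable positive functionals over
`𝒟` is unique, then the Lebesgue decomposition of positive functionals over `𝒜` is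
unique. -/
theorem cstar_lebesgue_unique_of_dense_subalgebra
    {A : Type} [NonUnitalCStarAlgebra A]
    (D : NonUnitalStarSubalgebra ℂ A) (hD : Dense (D : Set A))
    (hDu : LebDecompUniqueR ↥D) : LebDecompUniqueC A := by
  intro f g hf hg fr fs fr' fs' h h'
  obtain ⟨e1, e2⟩ := hDu _ _ (res_rep D hD f hf) (res_pos D f hf) (res_rep D hD g hg)
    (res_pos D g hg) _ _ _ _ (res_decomp D hD f g fr fs hg h) (res_decomp D hD f g fr' fs' hg h')
  exact ⟨eq_of_res D hD _ _ (posC_continuous _ h.1) (posC_continuous _ h'.1) e1,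
    eq_of_res D hD _ _ (posC_continuous _ h.2.1) (posC_continuous _ h'.2.1) e2⟩
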